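/- Let N ∈ ℕ, let K be a real symmetric positive semidefinite N×N matrix, M a real symmetric positive definite N×N matrix, W a diagonal positive definite N×N matrix, and γ ≥ 1 a constant with xᵀM x ≤ xᵀW x ≤ γ xᵀM x for all x ∈ ℝ^N. Let α, β > 0, a ≤ 0 ≤ b, and y_d, y_r ∈ ℝ^N. Define σ_{[a,b]}(ξ) = Σᵢ max(a ξᵢ, b ξᵢ) and the discretized dual objective Φ_h(λ, p, μ) = ½(K p − M y_d)ᵀ M⁻¹ (K p − M y_d) + (1/(2α))(λ + μ − p)ᵀ M (λ + μ − p) + (M y_r)ᵀ p + σ_{[a,b]}(M μ) − ½ y_dᵀ M y_d for λ ∈ [−β, β]^N (Φ_h = +∞ otherwise). Let t₁ = 1, t_{k+1} = (1 + √(1 + 4 t_k²))/2, β_k = (t_k − 1)/t_{k+1}. Given (λ⁰, p⁰, μ⁰) with λ⁰ ∈ [−β, β]^N and (λ̃¹, p̃¹, μ̃¹) = (λ⁰, p⁰, μ⁰), suppose the iterates satisfy: p̂^k is the unique minimizer of p ↦ ½(K p − M y_d)ᵀ M⁻¹ (K p − M y_d) + (1/(2α))(p − λ̃^k − μ̃^k)ᵀ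 M (p − λ̃^k − μ̃^k) + (M y_r)ᵀ p; λ^k uniquely minimizes over [−β, β]^N the function λ ↦ (1/(2α))(λ − (p̂^k − μ̃^k))ᵀ M (λ − (p̂^k − μ̃^k)) + (1/(2α))(λ − λ̃^k)ᵀ(W − M)(λ − λ̃^k); p^k is the unique minimizer of p ↦ ½(K p − M y_d)ᵀ M⁻¹ (K p − M y_d) + (1/(2α))(p − λ^k − μ̃^k)ᵀ M (p − λ^k − μ̃^k) + (M y_r)ᵀ p; μ^k is the unique minimizer of μ ↦ σ_{[a,b]}(M μ) + (1/(2α))(μ − (p^k − λ^k))ᵀ M (μ − (p^k − λ^k)) + (1/(2α))(μ − μ̃^k)ᵀ(γ M W⁻¹ M − M)(μ − μ̃^k); and (λ̃^{k+1}, p̃^{k+1}, μ̃^{k+1}) = (λ^k, p^k, μ^k) + β_k((λ^k, p^k, μ^k) − (λ^{k−1}, p^{k−1}, μ^{k−1})). If z* = (λ*, p*, μ*) minimizes Φ_h, then for all k ≥ 1, Φ_h(λ^k, p^k, μ^k) − Φ_h(z*) ≤ 4 τ_h/(k+1)², where τ_h = ½‖z⁰ − z*‖²_{S_h} with S_h the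 block-diagonal matrix (1/α)·Diag(M(M + α K M⁻¹ K)⁻¹ M + W − M, 0, γ M W⁻¹ M); moreover the sequence (λ^k, p^k, μ^k) is bounded. -/

import Mathlib

open Matrix

/-- Support function of the box `[a, b]^N` evaluated at `ξ`. -/
def boxSupport {N : ℕ} (a b : ℝ) (ξ : Fin N → ℝ) : ℝ :=
  ∑ i, max (a * ξ i) (b * ξ i)

/-- The discretized dual objective `Φ_h(λ, p, μ)`, restricted to `λ ∈ [−β, β]^N`
(outside, `Φ_h = +∞`, which is encoded by constraining all minimizations in `λ` to the
box). -/
noncomputable def discDualObj {N : ℕ} (K M : Matrix (Fin N) (Fin N) ℝ)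
    (α a b : ℝ) (yd yr : Fin N → ℝ) (lam p mu : Fin N → ℝ) : ℝ :=
  (1 / 2) * ((K *ᵥ p - M *ᵥ yd) ⬝ᵥ (M⁻¹ *ᵥ (K *ᵥ p - M *ᵥ yd)))
    + (1 / (2 * α)) * ((lam + mu - p) ⬝ᵥ (M *ᵥ (lam + mu - p)))
    + (M *ᵥ yr) ⬝ᵥ p + boxSupport a b (M *ᵥ mu)
    - (1 / 2) * (yd ⬝ᵥ (M *ᵥ yd))


lemma aux_swap {N : ℕ} {P : Matrix (Fin N) (Fin N) ℝ} (hP : P.IsSymm) (x y : Fin N → ℝ) :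
    x ⬝ᵥ (P *ᵥ y) = y ⬝ᵥ (P *ᵥ x) := by
  rw [dotProduct_mulVec, ← mulVec_transpose, hP.eq, dotProduct_comm]

lemma aux_expand {N : ℕ} {P : Matrix (Fin N) (Fin N) ℝ} (hP : P.IsSymm) (u v : Fin N → ℝ)
    (s : ℝ) : (u + s • v) ⬝ᵥ (P *ᵥ (u + s • v))
      = u ⬝ᵥ (P *ᵥ u) + 2 * s * (u ⬝ᵥ (P *ᵥ v)) + s ^ 2 * (v ⬝ᵥ (P *ᵥ v)) := by
  simp only [mulVec_add, mulVec_smul, add_dotProduct, dotProduct_add, smul_dotProduct,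
    dotProduct_smul, smul_eq_mul]
  rw [aux_swap hP v u]; ring

lemma aux_expand1 {N : ℕ} {P : Matrix (Fin N) (Fin N) ℝ} (hP : P.IsSymm) (u v : Fin N → ℝ) :
    (u + v) ⬝ᵥ (P *ᵥ (u + v))
      = u ⬝ᵥ (P *ᵥ u) + 2 * (u ⬝ᵥ (P *ᵥ v)) + (v ⬝ᵥ (P *ᵥ v)) := by
  have := aux_expand hP u v 1
  simpa using this

lemma aux_lim {c d : ℝ} (h : ∀ s : ℝ, 0 < s → s ≤ 1 → 0 ≤ s * c + s ^ 2 * d) : 0 ≤ c := by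
  by_contra hc
  push Not at hc
  have hD : 0 < |d| + 1 := by positivity
  have hs : 0 < min 1 (-c / (2 * (|d| + 1))) :=
    lt_min one_pos (div_pos (by linarith) (by positivity))
  set s := min 1 (-c / (2 * (|d| + 1))) with hsdef
  have h1 := h s hs (min_le_left _ _)
  have h2 : s * (2 * (|d| + 1)) ≤ -c := by
    have : s ≤ -c / (2 * (|d| + 1)) := min_le_right _ _
    rwa [le_div_iff₀ (by positivity)] at this
  have h3 : 0 ≤ c + s * d := by
    have : 0 ≤ s * (c + s * d) := by nlinarith
    exact nonneg_of_mul_nonneg_right this hs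
  have h4 : s * d ≤ s * |d| := mul_le_mul_of_nonneg_left (le_abs_self d) hs.le
  nlinarith

lemma aux_box {N : ℕ} (a b : ℝ) (x y : Fin N → ℝ) (s : ℝ) (h0 : 0 ≤ s) (h1 : s ≤ 1) :
    boxSupport a b (x + s • (y - x)) ≤ boxSupport a b x
      + s * (boxSupport a b y - boxSupport a b x) := by
  unfold boxSupport
  rw [← Finset.sum_sub_distrib, Finset.mul_sum, ← Finset.sum_add_distrib]
  refine Finset.sum_le_sum fun i _ => ?_
  simp only [Pi.add_apply, Pi.smul_apply, Pi.sub_apply, smul_eq_mul]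
  have a1 := le_max_left (a * x i) (b * x i)
  have a2 := le_max_right (a * x i) (b * x i)
  have a3 := le_max_left (a * y i) (b * y i)
  have a4 := le_max_right (a * y i) (b * y i)
  have h1' : 0 ≤ 1 - s := by linarith
  refine max_le ?_ ?_
  · nlinarith [mul_le_mul_of_nonneg_left a1 h1', mul_le_mul_of_nonneg_left a3 h0]
  · nlinarith [mul_le_mul_of_nonneg_left a2 h1', mul_le_mul_of_nonneg_left a4 h0]

lemma aux_popt {N : ℕ} {K M J : Matrix (Fin N) (Fin N) ℝ} (hM : M.IsSymm) (hJ : J.IsSymm)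
    {α : ℝ} (_hα : 0 < α) (c r l m x : Fin N → ℝ)
    (h : ∀ q : Fin N → ℝ,
      (1 / 2) * ((K *ᵥ x - c) ⬝ᵥ (J *ᵥ (K *ᵥ x - c)))
          + (1 / (2 * α)) * ((x - l - m) ⬝ᵥ (M *ᵥ (x - l - m))) + r ⬝ᵥ x
        ≤ (1 / 2) * ((K *ᵥ q - c) ⬝ᵥ (J *ᵥ (K *ᵥ q - c)))
          + (1 / (2 * α)) * ((q - l - m) ⬝ᵥ (M *ᵥ (q - l - m))) + r ⬝ᵥ q) (g : Fin N → ℝ) :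
    (K *ᵥ x - c) ⬝ᵥ (J *ᵥ (K *ᵥ g)) + (1 / α) * ((x - l - m) ⬝ᵥ (M *ᵥ g)) + r ⬝ᵥ g = 0 := by
  have key : ∀ g : Fin N → ℝ, 0 ≤
      (K *ᵥ x - c) ⬝ᵥ (J *ᵥ (K *ᵥ g)) + (1 / α) * ((x - l - m) ⬝ᵥ (M *ᵥ g)) + r ⬝ᵥ g := by
    intro g
    refine aux_lim (d := (1 / 2) * ((K *ᵥ g) ⬝ᵥ (J *ᵥ (K *ᵥ g)))
      + (1 / (2 * α)) * (g ⬝ᵥ (M *ᵥ g))) fun s hs _ => ?_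
    have h1 := h (x + s • g)
    have e1 : K *ᵥ (x + s • g) - c = (K *ᵥ x - c) + s • (K *ᵥ g) := by
      rw [mulVec_add, mulVec_smul]; abel
    have e2 : x + s • g - l - m = (x - l - m) + s • g := by abel
    rw [e1, e2, aux_expand hJ, aux_expand hM, dotProduct_add, dotProduct_smul, smul_eq_mul] at h1
    have e3 : (1 / α : ℝ) = 2 * (1 / (2 * α)) := by field_simp
    rw [e3]
    linarith
  have h1 := key g
  have h2 := key (-g)
  simp only [mulVec_neg, dotProduct_neg] at h2
  linarith

lemma aux_pvec {N : ℕ} {K M : Matrix (Fin N) (Fin N) ℝ} (hK : K.IsSymm) (hM : M.IsSymm)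
    (hMu : IsUnit M.det)
    {α : ℝ} (hα : 0 < α) (yd yr l m x : Fin N → ℝ)
    (h : ∀ g : Fin N → ℝ, (K *ᵥ x - M *ᵥ yd) ⬝ᵥ (M⁻¹ *ᵥ (K *ᵥ g))
      + (1 / α) * ((x - l - m) ⬝ᵥ (M *ᵥ g)) + (M *ᵥ yr) ⬝ᵥ g = 0) :
    (M + α • (K * M⁻¹ * K)) *ᵥ x = M *ᵥ (l + m) + α • (K *ᵥ yd - M *ᵥ yr) := by
  have hJ : (M⁻¹).IsSymm := by
    unfold Matrix.IsSymm; rw [transpose_nonsing_inv, hM.eq]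
  have h0 : K *ᵥ (M⁻¹ *ᵥ (K *ᵥ x - M *ᵥ yd)) + (1 / α) • (M *ᵥ (x - l - m)) + M *ᵥ yr = 0 := by
    rw [← dotProduct_eq_zero_iff]
    intro g
    rw [← h g, add_dotProduct, add_dotProduct, smul_dotProduct, smul_eq_mul,
      aux_swap hJ, aux_swap hM _ g, dotProduct_comm _ g, dotProduct_comm _ g,
      aux_swap hK g]
    rw [dotProduct_comm (M⁻¹ *ᵥ _)]
  have e1 : M⁻¹ *ᵥ (M *ᵥ yd) = yd := by
    rw [mulVec_mulVec, nonsing_inv_mul _ hMu, one_mulVec]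
  rw [mulVec_sub, e1, mulVec_sub, mulVec_sub, mulVec_sub] at h0
  have h1 := congrArg (fun v => α • v) h0
  simp only [smul_add, smul_smul, smul_zero, mul_one_div_cancel hα.ne', one_smul] at h1
  rw [add_mulVec, smul_mulVec, ← mulVec_mulVec, ← mulVec_mulVec, mulVec_add, smul_sub]
  rw [← sub_eq_zero, ← h1, smul_sub]
  abel

/-- one-step inequality -/
lemma aux_step {N : ℕ} {K M J P R : Matrix (Fin N) (Fin N) ℝ}
    (hM : M.IsSymm) (hJ : J.IsSymm) (hP : P.IsSymm) (hR : R.IsSymm)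
    (hM0 : ∀ x : Fin N → ℝ, 0 ≤ x ⬝ᵥ (M *ᵥ x)) (hJ0 : ∀ x : Fin N → ℝ, 0 ≤ x ⬝ᵥ (J *ᵥ x))
    (hP0 : ∀ x : Fin N → ℝ, 0 ≤ x ⬝ᵥ (P *ᵥ x))
    (hMR : ∀ x : Fin N → ℝ, x ⬝ᵥ (M *ᵥ x) ≤ x ⬝ᵥ (R *ᵥ x))
    {α : ℝ} (hα : 0 < α) (c r lk pk mk lt mt e g f : Fin N → ℝ) (σ σk : ℝ)
    (hpo : (K *ᵥ pk - c) ⬝ᵥ (J *ᵥ (K *ᵥ g)) + (1 / α) * ((pk - lk - mt) ⬝ᵥ (M *ᵥ g))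
      + r ⬝ᵥ g = 0)
    (hlo : 0 ≤ (lk + mt - pk) ⬝ᵥ (M *ᵥ e) + (lk - lt) ⬝ᵥ (P *ᵥ e))
    (hmo : 0 ≤ σ - σk + (1 / α) * ((mk + lk - pk) ⬝ᵥ (M *ᵥ f)
      + (mk - mt) ⬝ᵥ (R *ᵥ f) - (mk - mt) ⬝ᵥ (M *ᵥ f))) :
    ((1 / 2) * ((K *ᵥ pk - c) ⬝ᵥ (J *ᵥ (K *ᵥ pk - c)))
      + (1 / (2 * α)) * ((lk + mk - pk) ⬝ᵥ (M *ᵥ (lk + mk - pk))) + r ⬝ᵥ pk + σk)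
    - ((1 / 2) * ((K *ᵥ (pk + g) - c) ⬝ᵥ (J *ᵥ (K *ᵥ (pk + g) - c)))
      + (1 / (2 * α)) * (((lk + e) + (mk + f) - (pk + g)) ⬝ᵥ
          (M *ᵥ ((lk + e) + (mk + f) - (pk + g)))) + r ⬝ᵥ (pk + g) + σ)
    ≤ (1 / (2 * α)) * (((lk + e - lt) ⬝ᵥ (P *ᵥ (lk + e - lt)) - e ⬝ᵥ (P *ᵥ e))
      + ((mk + f - mt) ⬝ᵥ (R *ᵥ (mk + f - mt)) - f ⬝ᵥ (R *ᵥ f))) := by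
  obtain ⟨d, rfl⟩ : ∃ d, mk = mt + d := ⟨mk - mt, by abel⟩
  obtain ⟨dl, rfl⟩ : ∃ d, lk = lt + d := ⟨lk - lt, by abel⟩
  obtain ⟨w, hw⟩ : ∃ w, w = lt + dl + mt - pk := ⟨_, rfl⟩
  have e1 : pk - (lt + dl) - mt = -w := by rw [hw]; abel
  have e2 : mt + d + (lt + dl) - pk = w + d := by rw [hw]; abel
  have e3 : lt + dl + (mt + d) - pk = w + d := by rw [hw]; abel
  have e4 : lt + dl + e + (mt + d + f) - (pk + g) = w + (d + (e + f - g)) := by rw [hw]; abel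
  have e5 : lt + dl + e - lt = dl + e := by abel
  have e6 : mt + d + f - mt = d + f := by abel
  have e7 : K *ᵥ (pk + g) - c = (K *ᵥ pk - c) + K *ᵥ g := by rw [mulVec_add]; abel
  have e8 : mt + d - mt = d := by abel
  have e9 : lt + dl - lt = dl := by abel
  rw [e1] at hpo
  rw [← hw, e9] at hlo
  rw [e2, e8] at hmo
  rw [e3, e4, e5, e6, e7, aux_expand1 hJ, aux_expand1 hM w, aux_expand1 hM w,
    aux_expand1 hM d, aux_expand1 hP, aux_expand1 hR]
  have n1 := hJ0 (K *ᵥ g)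
  have n2 := hM0 (d + (e + f - g))
  have n3 := hP0 dl
  have n4 := hMR d
  rw [aux_expand1 hM] at n2
  simp only [mulVec_add, mulVec_sub, dotProduct_add, dotProduct_sub, neg_dotProduct,
    add_dotProduct] at *
  have i0 : 0 < 1 / (2 * α) := by positivity
  have i1 : (1 / α : ℝ) = 2 * (1 / (2 * α)) := by field_simp
  rw [i1] at hpo hmo
  generalize 1 / (2 * α) = A at *
  have m2 := mul_nonneg i0.le n2
  have m3 := mul_nonneg i0.le n3
  have m4 := mul_nonneg i0.le (sub_nonneg.2 n4)
  have m5 := mul_nonneg i0.le hlo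
  ring_nf at *
  linarith

lemma aux_tcomb {N : ℕ} (P : Matrix (Fin N) (Fin N) ℝ) (x1 xs y z : Fin N → ℝ) (t : ℝ) :
    t * (t - 1) * ((x1 - y) ⬝ᵥ (P *ᵥ (x1 - y)) - (x1 - z) ⬝ᵥ (P *ᵥ (x1 - z)))
      + t * ((xs - y) ⬝ᵥ (P *ᵥ (xs - y)) - (xs - z) ⬝ᵥ (P *ᵥ (xs - z)))
    = (t • y - (t - 1) • x1 - xs) ⬝ᵥ (P *ᵥ (t • y - (t - 1) • x1 - xs))
      - (t • z - (t - 1) • x1 - xs) ⬝ᵥ (P *ᵥ (t • z - (t - 1) • x1 - xs)) := by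
  simp only [mulVec_sub, mulVec_smul, sub_dotProduct, dotProduct_sub, smul_dotProduct,
    dotProduct_smul, smul_eq_mul]
  ring

lemma aux_coord {N : ℕ} {M : Matrix (Fin N) (Fin N) ℝ} (hM : M.IsSymm) (hMu : IsUnit M.det)
    (hM0 : ∀ x : Fin N → ℝ, 0 ≤ x ⬝ᵥ (M *ᵥ x)) (C : ℝ) :
    ∃ B : ℝ, 0 ≤ B ∧ ∀ u : Fin N → ℝ, u ⬝ᵥ (M *ᵥ u) ≤ C → ‖u‖ ≤ B := by
  set v : Fin N → Fin N → ℝ := fun i => M⁻¹ *ᵥ (Pi.single i 1) with hv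
  set D : ℝ := ∑ i, (v i) ⬝ᵥ (M *ᵥ (v i)) with hD
  have hD0 : 0 ≤ D := Finset.sum_nonneg fun i _ => hM0 _
  refine ⟨|C| + D, by positivity, fun u hu => ?_⟩
  rw [pi_norm_le_iff_of_nonneg (by positivity)]
  intro i
  have h1 : v i ⬝ᵥ (M *ᵥ (v i)) ≤ D :=
    Finset.single_le_sum (f := fun i => (v i) ⬝ᵥ (M *ᵥ (v i))) (fun i _ => hM0 _)
      (Finset.mem_univ i)
  have h2 : u ⬝ᵥ (M *ᵥ (v i)) = u i := by
    simp only [hv]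
    rw [mulVec_mulVec, mul_nonsing_inv _ hMu, one_mulVec, dotProduct_single, mul_one]
  have h3 := hM0 (u + (1 : ℝ) • v i)
  have h4 := hM0 (u + (-1 : ℝ) • v i)
  rw [aux_expand hM, h2] at h3 h4
  have := le_abs_self C
  have := abs_nonneg C
  rw [Real.norm_eq_abs, abs_le]
  constructor <;> nlinarith

lemma aux_mv {N : ℕ} (A : Matrix (Fin N) (Fin N) ℝ) :
    ∃ C : ℝ, 0 ≤ C ∧ ∀ x : Fin N → ℝ, ‖A *ᵥ x‖ ≤ C * ‖x‖ :=
  ⟨‖LinearMap.toContinuousLinearMap (Matrix.toLin' A)‖, norm_nonneg _, fun x => by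
    simpa using (LinearMap.toContinuousLinearMap (Matrix.toLin' A)).le_opNorm x⟩

lemma aux_lopt {N : ℕ} {M T : Matrix (Fin N) (Fin N) ℝ} (hM : M.IsSymm) (hT : T.IsSymm)
    {α β : ℝ} (hα : 0 < α) (x c d l : Fin N → ℝ) (hx : ∀ i, |x i| ≤ β) (hl : ∀ i, |l i| ≤ β)
    (h : ∀ l : Fin N → ℝ, (∀ i, |l i| ≤ β) →
      (1 / (2 * α)) * ((x - c) ⬝ᵥ (M *ᵥ (x - c))) + (1 / (2 * α)) * ((x - d) ⬝ᵥ (T *ᵥ (x - d)))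
      ≤ (1 / (2 * α)) * ((l - c) ⬝ᵥ (M *ᵥ (l - c)))
        + (1 / (2 * α)) * ((l - d) ⬝ᵥ (T *ᵥ (l - d)))) :
    0 ≤ (x - c) ⬝ᵥ (M *ᵥ (l - x)) + (x - d) ⬝ᵥ (T *ᵥ (l - x)) := by
  have hA : 0 < 1 / (2 * α) := by positivity
  generalize 1 / (2 * α) = A at *
  suffices 0 ≤ A * (2 * ((x - c) ⬝ᵥ (M *ᵥ (l - x)) + (x - d) ⬝ᵥ (T *ᵥ (l - x)))) by
    have := nonneg_of_mul_nonneg_right this hA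
    linarith
  refine aux_lim (d := A * ((l - x) ⬝ᵥ (M *ᵥ (l - x)) + (l - x) ⬝ᵥ (T *ᵥ (l - x))))
    fun s hs hs1 => ?_
  have h1 := h (x + s • (l - x)) (fun i => by
    have a1 := abs_le.1 (hx i)
    have a2 := abs_le.1 (hl i)
    simp only [Pi.add_apply, Pi.smul_apply, Pi.sub_apply, smul_eq_mul]
    rw [abs_le]
    constructor <;> nlinarith)
  rw [show x + s • (l - x) - c = (x - c) + s • (l - x) by abel,
    show x + s • (l - x) - d = (x - d) + s • (l - x) by abel, aux_expand hM, aux_expand hT] at h1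
  linarith

lemma aux_mopt {N : ℕ} {M T : Matrix (Fin N) (Fin N) ℝ} (hM : M.IsSymm) (hT : T.IsSymm)
    {α a b : ℝ} (hα : 0 < α) (x c d l : Fin N → ℝ)
    (h : ∀ l : Fin N → ℝ,
      boxSupport a b (M *ᵥ x) + (1 / (2 * α)) * ((x - c) ⬝ᵥ (M *ᵥ (x - c)))
        + (1 / (2 * α)) * ((x - d) ⬝ᵥ (T *ᵥ (x - d)))
      ≤ boxSupport a b (M *ᵥ l) + (1 / (2 * α)) * ((l - c) ⬝ᵥ (M *ᵥ (l - c)))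
        + (1 / (2 * α)) * ((l - d) ⬝ᵥ (T *ᵥ (l - d)))) :
    0 ≤ boxSupport a b (M *ᵥ l) - boxSupport a b (M *ᵥ x)
      + (1 / α) * ((x - c) ⬝ᵥ (M *ᵥ (l - x)) + (x - d) ⬝ᵥ (T *ᵥ (l - x))) := by
  have i1 : (1 / α : ℝ) = 2 * (1 / (2 * α)) := by field_simp
  rw [i1]
  generalize 1 / (2 * α) = A at *
  refine aux_lim (d := A * ((l - x) ⬝ᵥ (M *ᵥ (l - x)) + (l - x) ⬝ᵥ (T *ᵥ (l - x))))
    fun s hs hs1 => ?_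
  have h1 := h (x + s • (l - x))
  have h2 := aux_box a b (M *ᵥ x) (M *ᵥ l) s hs.le hs1
  rw [show x + s • (l - x) - c = (x - c) + s • (l - x) by abel,
    show x + s • (l - x) - d = (x - d) + s • (l - x) by abel, aux_expand hM, aux_expand hT,
    mulVec_add, mulVec_smul, mulVec_sub M l x] at h1
  rw [mulVec_sub M l x] at *
  linarith

/-- Convergence and boundedness theorem for the finite-element-discretized sGS-majorized
ABCD algorithm applied to the finite-dimensional dual problem `(D_h)`: the objective gap
decays like `4 τ_h / (k+1)²` and the iterate sequence is bounded. -/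
theorem sGS_mABCD_convergence_discretized
    (N : ℕ) (K M W : Matrix (Fin N) (Fin N) ℝ)
    (hKsymm : K.IsSymm) (hKpsd : K.PosSemidef)
    (hMsymm : M.IsSymm) (hMpd : M.PosDef)
    (hWdiag : W.IsDiag) (hWpd : W.PosDef)
    (γ : ℝ) (hγ : 1 ≤ γ)
    (hMW : ∀ x : Fin N → ℝ, x ⬝ᵥ (M *ᵥ x) ≤ x ⬝ᵥ (W *ᵥ x))
    (hWM : ∀ x : Fin N → ℝ, x ⬝ᵥ (W *ᵥ x) ≤ γ * (x ⬝ᵥ (M *ᵥ x)))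
    (α β a b : ℝ) (hα : 0 < α) (hβ : 0 < β) (ha : a ≤ 0) (hb : 0 ≤ b)
    (yd yr : Fin N → ℝ)
    -- iterates and extrapolated points
    (lam p mu phat lamE pE muE : ℕ → Fin N → ℝ) (t : ℕ → ℝ)
    (ht1 : t 1 = 1)
    (htrec : ∀ k ≥ 1, t (k + 1) = (1 + Real.sqrt (1 + 4 * t k ^ 2)) / 2)
    (hinit : lamE 1 = lam 0 ∧ pE 1 = p 0 ∧ muE 1 = mu 0 ∧ ∀ i, |lam 0 i| ≤ β)
    (hphat : ∀ k ≥ 1, ∀ q : Fin N → ℝ,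
      (1 / 2) * ((K *ᵥ phat k - M *ᵥ yd) ⬝ᵥ (M⁻¹ *ᵥ (K *ᵥ phat k - M *ᵥ yd)))
          + (1 / (2 * α)) * ((phat k - lamE k - muE k) ⬝ᵥ (M *ᵥ (phat k - lamE k - muE k)))
          + (M *ᵥ yr) ⬝ᵥ phat k
        ≤ (1 / 2) * ((K *ᵥ q - M *ᵥ yd) ⬝ᵥ (M⁻¹ *ᵥ (K *ᵥ q - M *ᵥ yd)))
          + (1 / (2 * α)) * ((q - lamE k - muE k) ⬝ᵥ (M *ᵥ (q - lamE k - muE k)))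
          + (M *ᵥ yr) ⬝ᵥ q)
    (hlam : ∀ k ≥ 1, (∀ i, |lam k i| ≤ β) ∧ ∀ l : Fin N → ℝ, (∀ i, |l i| ≤ β) →
      (1 / (2 * α)) * ((lam k - (phat k - muE k)) ⬝ᵥ (M *ᵥ (lam k - (phat k - muE k))))
          + (1 / (2 * α)) * ((lam k - lamE k) ⬝ᵥ ((W - M) *ᵥ (lam k - lamE k)))
        ≤ (1 / (2 * α)) * ((l - (phat k - muE k)) ⬝ᵥ (M *ᵥ (l - (phat k - muE k))))
          + (1 / (2 * α)) * ((l - lamE k) ⬝ᵥ ((W - M) *ᵥ (l - lamE k))))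
    (hp : ∀ k ≥ 1, ∀ q : Fin N → ℝ,
      (1 / 2) * ((K *ᵥ p k - M *ᵥ yd) ⬝ᵥ (M⁻¹ *ᵥ (K *ᵥ p k - M *ᵥ yd)))
          + (1 / (2 * α)) * ((p k - lam k - muE k) ⬝ᵥ (M *ᵥ (p k - lam k - muE k)))
          + (M *ᵥ yr) ⬝ᵥ p k
        ≤ (1 / 2) * ((K *ᵥ q - M *ᵥ yd) ⬝ᵥ (M⁻¹ *ᵥ (K *ᵥ q - M *ᵥ yd)))
          + (1 / (2 * α)) * ((q - lam k - muE k) ⬝ᵥ (M *ᵥ (q - lam k - muE k)))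
          + (M *ᵥ yr) ⬝ᵥ q)
    (hmu : ∀ k ≥ 1, ∀ m : Fin N → ℝ,
      boxSupport a b (M *ᵥ mu k)
          + (1 / (2 * α)) * ((mu k - (p k - lam k)) ⬝ᵥ (M *ᵥ (mu k - (p k - lam k))))
          + (1 / (2 * α)) * ((mu k - muE k) ⬝ᵥ
              ((γ • (M * W⁻¹ * M) - M) *ᵥ (mu k - muE k)))
        ≤ boxSupport a b (M *ᵥ m)
          + (1 / (2 * α)) * ((m - (p k - lam k)) ⬝ᵥ (M *ᵥ (m - (p k - lam k))))
          + (1 / (2 * α)) * ((m - muE k) ⬝ᵥ ((γ • (M * W⁻¹ * M) - M) *ᵥ (m - muE k))))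
    (hextr : ∀ k ≥ 1,
      lamE (k + 1) = lam k + ((t k - 1) / t (k + 1)) • (lam k - lam (k - 1)) ∧
      pE (k + 1) = p k + ((t k - 1) / t (k + 1)) • (p k - p (k - 1)) ∧
      muE (k + 1) = mu k + ((t k - 1) / t (k + 1)) • (mu k - mu (k - 1)))
    -- a minimizer of `Φ_h`
    (lams ps mus : Fin N → ℝ) (hlams : ∀ i, |lams i| ≤ β)
    (hmin : ∀ l : Fin N → ℝ, (∀ i, |l i| ≤ β) → ∀ q m : Fin N → ℝ,
      discDualObj K M α a b yd yr lams ps mus ≤ discDualObj K M α a b yd yr l q m) :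
    (∀ k ≥ 1,
      discDualObj K M α a b yd yr (lam k) (p k) (mu k)
          - discDualObj K M α a b yd yr lams ps mus
        ≤ 4 * ((1 / (2 * α)) * ((lam 0 - lams) ⬝ᵥ
                ((M * (M + α • (K * M⁻¹ * K))⁻¹ * M + W - M) *ᵥ (lam 0 - lams)))
              + (1 / (2 * α)) * (γ * ((mu 0 - mus) ⬝ᵥ ((M * W⁻¹ * M) *ᵥ (mu 0 - mus)))))
            / ((k : ℝ) + 1) ^ 2) ∧
    ∃ R : ℝ, ∀ k : ℕ, ‖lam k‖ + ‖p k‖ + ‖mu k‖ ≤ R := by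

  -- preliminary facts
  have hMu : IsUnit M.det := hMpd.det_pos.ne'.isUnit
  have hWu : IsUnit W.det := hWpd.det_pos.ne'.isUnit
  have symInv : ∀ {Q : Matrix (Fin N) (Fin N) ℝ}, Q.IsSymm → (Q⁻¹).IsSymm := by
    intro Q hQ
    unfold Matrix.IsSymm; rw [transpose_nonsing_inv, hQ.eq]
  have hWsymm : W.IsSymm := hWdiag.isSymm
  have hJ : (M⁻¹).IsSymm := symInv hMsymm
  have posV : ∀ {Q : Matrix (Fin N) (Fin N) ℝ}, Q.PosSemidef →
      ∀ x : Fin N → ℝ, 0 ≤ x ⬝ᵥ (Q *ᵥ x) := by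
    intro Q hQ x
    simpa using hQ.dotProduct_mulVec_nonneg x
  have hM0 := posV hMpd.posSemidef
  have hW0 := posV hWpd.posSemidef
  have hJ0 := posV hMpd.inv.posSemidef
  obtain ⟨A, hA⟩ : ∃ A, A = M + α • (K * M⁻¹ * K) := ⟨_, rfl⟩
  have hKK : (K * M⁻¹ * K).PosSemidef := by
    have := hMpd.inv.posSemidef.mul_mul_conjTranspose_same K
    rwa [hKpsd.1.eq] at this
  have hApd : A.PosDef := by
    rw [hA]
    exact hMpd.add_posSemidef (hKK.smul hα.le)
  have hAu : IsUnit A.det := hApd.det_pos.ne'.isUnit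
  have hAsymm : A.IsSymm := by
    have := hApd.1
    unfold Matrix.IsHermitian at this
    rwa [conjTranspose_eq_transpose_of_trivial] at this
  have hAi := symInv hAsymm
  have hWi := symInv hWsymm
  have hAi0 := posV hApd.inv.posSemidef
  obtain ⟨P, hPdef⟩ : ∃ P, P = M * A⁻¹ * M + W - M := ⟨_, rfl⟩
  obtain ⟨R, hRdef⟩ : ∃ R, R = γ • (M * W⁻¹ * M) := ⟨_, rfl⟩
  have sandSymm : ∀ {Q : Matrix (Fin N) (Fin N) ℝ}, Q.IsSymm → (M * Q * M).IsSymm := by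
    intro Q hQ
    unfold Matrix.IsSymm
    rw [transpose_mul, transpose_mul, hMsymm.eq, hQ.eq, Matrix.mul_assoc]
  have sandMv : ∀ (Q : Matrix (Fin N) (Fin N) ℝ) (x y : Fin N → ℝ),
      x ⬝ᵥ ((M * Q * M) *ᵥ y) = (M *ᵥ x) ⬝ᵥ (Q *ᵥ (M *ᵥ y)) := by
    intro Q x y
    rw [← mulVec_mulVec, ← mulVec_mulVec, aux_swap hMsymm, dotProduct_comm]
  have hP : P.IsSymm := by
    rw [hPdef]; exact ((sandSymm hAi).add hWsymm).sub hMsymm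
  have hR : R.IsSymm := by
    rw [hRdef]; exact (sandSymm hWi).smul γ
  have hP0 : ∀ x : Fin N → ℝ, 0 ≤ x ⬝ᵥ (P *ᵥ x) := by
    intro x
    rw [hPdef, sub_mulVec, add_mulVec, dotProduct_sub, dotProduct_add, sandMv]
    have := hAi0 (M *ᵥ x)
    have := hMW x
    linarith
  have hMR : ∀ x : Fin N → ℝ, x ⬝ᵥ (M *ᵥ x) ≤ x ⬝ᵥ (R *ᵥ x) := by
    intro x
    have h1 := hW0 (x + (-γ) • (W⁻¹ *ᵥ (M *ᵥ x)))
    have e1 : W *ᵥ (W⁻¹ *ᵥ (M *ᵥ x)) = M *ᵥ x := by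
      rw [mulVec_mulVec, mul_nonsing_inv _ hWu, one_mulVec]
    rw [aux_expand hWsymm, e1] at h1
    rw [hRdef, smul_mulVec, dotProduct_smul, sandMv, smul_eq_mul, dotProduct_comm (M *ᵥ x)]
    have h2 := hWM x
    have h3 : 0 ≤ γ * (γ * ((W⁻¹ *ᵥ (M *ᵥ x)) ⬝ᵥ (M *ᵥ x)) - x ⬝ᵥ (M *ᵥ x)) := by
      linarith
    have := nonneg_of_mul_nonneg_right h3 (by linarith)
    linarith
  have hR0 : ∀ x : Fin N → ℝ, 0 ≤ x ⬝ᵥ (R *ᵥ x) := fun x => (hM0 x).trans (hMR x)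
  -- optimality conditions
  have hpo : ∀ k ≥ 1, _ := fun k hk => aux_popt hMsymm hJ hα _ _ _ _ _ (hp k hk)
  have hpho : ∀ k ≥ 1, _ := fun k hk => aux_popt hMsymm hJ hα _ _ _ _ _ (hphat k hk)
  have hpv : ∀ k ≥ 1, A *ᵥ p k = M *ᵥ (lam k + muE k) + α • (K *ᵥ yd - M *ᵥ yr) := fun k hk => by
    rw [hA]; exact aux_pvec hKsymm hMsymm hMu hα yd yr _ _ _ (hpo k hk)
  have hphv : ∀ k ≥ 1, A *ᵥ phat k = M *ᵥ (lamE k + muE k) + α • (K *ᵥ yd - M *ᵥ yr) :=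
    fun k hk => by
      rw [hA]; exact aux_pvec hKsymm hMsymm hMu hα yd yr _ _ _ (hpho k hk)
  have hinvA : ∀ x y : Fin N → ℝ, A *ᵥ x = y → x = A⁻¹ *ᵥ y := by
    intro x y h
    rw [← h, mulVec_mulVec, nonsing_inv_mul _ hAu, one_mulVec]
  have hdiff : ∀ k ≥ 1, p k - phat k = A⁻¹ *ᵥ (M *ᵥ (lam k - lamE k)) := fun k hk => by
    apply hinvA
    rw [mulVec_sub, hpv k hk, hphv k hk, mulVec_add, mulVec_add, mulVec_sub]
    abel
  have hlo : ∀ k ≥ 1, ∀ l : Fin N → ℝ, (∀ i, |l i| ≤ β) →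
      0 ≤ (lam k + muE k - p k) ⬝ᵥ (M *ᵥ (l - lam k))
        + (lam k - lamE k) ⬝ᵥ (P *ᵥ (l - lam k)) := by
    intro k hk l hl
    have h1 := aux_lopt hMsymm (hWsymm.sub hMsymm) hα _ _ _ l (hlam k hk).1 hl (hlam k hk).2
    have e1 : lam k - (phat k - muE k) = (lam k + muE k - p k)
        + A⁻¹ *ᵥ (M *ᵥ (lam k - lamE k)) := by
      rw [← hdiff k hk]; abel
    rw [e1, add_dotProduct, dotProduct_comm (A⁻¹ *ᵥ _), aux_swap hAi, ← sandMv] at h1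
    rw [hPdef, sub_mulVec, add_mulVec, dotProduct_sub, dotProduct_add]
    rw [sub_mulVec, dotProduct_sub] at h1
    linarith
  have hmo : ∀ k ≥ 1, ∀ m : Fin N → ℝ,
      0 ≤ boxSupport a b (M *ᵥ m) - boxSupport a b (M *ᵥ mu k)
        + (1 / α) * ((mu k + lam k - p k) ⬝ᵥ (M *ᵥ (m - mu k))
        + (mu k - muE k) ⬝ᵥ (R *ᵥ (m - mu k)) - (mu k - muE k) ⬝ᵥ (M *ᵥ (m - mu k))) := by
    intro k hk m
    have h1 := aux_mopt hMsymm (hR.sub hMsymm) hα _ _ _ m (by rw [hRdef]; exact hmu k hk)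
    have e1 : mu k - (p k - lam k) = mu k + lam k - p k := by abel
    rw [e1, sub_mulVec, dotProduct_sub] at h1
    rwa [add_sub_assoc]
  obtain ⟨F, hF⟩ : ∃ F, F = discDualObj K M α a b yd yr := ⟨_, rfl⟩
  have hstep : ∀ k ≥ 1, ∀ l q m : Fin N → ℝ, (∀ i, |l i| ≤ β) →
      F (lam k) (p k) (mu k) - F l q m
      ≤ (1 / (2 * α)) * (((l - lamE k) ⬝ᵥ (P *ᵥ (l - lamE k))
          - (l - lam k) ⬝ᵥ (P *ᵥ (l - lam k)))
        + ((m - muE k) ⬝ᵥ (R *ᵥ (m - muE k)) - (m - mu k) ⬝ᵥ (R *ᵥ (m - mu k)))) := by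
    intro k hk l q m hl
    have h1 := aux_step hMsymm hJ hP hR hM0 hJ0 hP0 hMR hα (M *ᵥ yd) (M *ᵥ yr) (lam k) (p k)
      (mu k) (lamE k) (muE k) (l - lam k) (q - p k) (m - mu k) _ _ (hpo k hk _)
      (hlo k hk l hl) (hmo k hk m)
    simp only [add_sub_cancel] at h1
    rw [hF]
    unfold discDualObj
    linarith
  rw [← hF]
  rw [← hF] at hmin
  rw [← hA, ← hPdef]
  have eR : ∀ x : Fin N → ℝ, γ * (x ⬝ᵥ ((M * W⁻¹ * M) *ᵥ x)) = x ⬝ᵥ (R *ᵥ x) := by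
    intro x
    rw [hRdef, smul_mulVec, dotProduct_smul, smul_eq_mul]
  rw [eR]
  -- the t sequence
  have htb : ∀ k : ℕ, ((k : ℝ) + 2) / 2 ≤ t (k + 1) := by
    intro k
    induction k with
    | zero => simp [ht1]
    | succ n ih =>
      rw [htrec (n + 1) (by omega)]
      have hn : (0 : ℝ) ≤ n := n.cast_nonneg
      have : 2 * t (n + 1) ≤ Real.sqrt (1 + 4 * t (n + 1) ^ 2) := by
        apply Real.le_sqrt_of_sq_le
        nlinarith
      push_cast
      linarith
  have ht1' : ∀ k : ℕ, 1 ≤ t (k + 1) := fun k => by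
    have := htb k
    have hn : (0 : ℝ) ≤ k := k.cast_nonneg
    linarith
  have htq : ∀ k : ℕ, t (k + 2) * (t (k + 2) - 1) = t (k + 1) ^ 2 := by
    intro k
    rw [htrec (k + 1) (by omega)]
    have := Real.sq_sqrt (show 0 ≤ 1 + 4 * t (k + 1) ^ 2 by positivity)
    nlinarith
  obtain ⟨τ, hτ⟩ : ∃ τ, τ = (1 / (2 * α)) * ((lam 0 - lams) ⬝ᵥ (P *ᵥ (lam 0 - lams)))
    + (1 / (2 * α)) * ((mu 0 - mus) ⬝ᵥ (R *ᵥ (mu 0 - mus))) := ⟨_, rfl⟩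
  have negq : ∀ (Q : Matrix (Fin N) (Fin N) ℝ) (x y : Fin N → ℝ),
      (x - y) ⬝ᵥ (Q *ᵥ (x - y)) = (y - x) ⬝ᵥ (Q *ᵥ (y - x)) := by
    intro Q x y
    rw [← neg_sub y x, mulVec_neg, neg_dotProduct_neg]
  have hfis : ∀ k : ℕ, t (k + 1) ^ 2 * (F (lam (k + 1)) (p (k + 1)) (mu (k + 1)) - F lams ps mus)
      + (1 / (2 * α)) * ((t (k + 1) • lam (k + 1) - (t (k + 1) - 1) • lam k - lams) ⬝ᵥ
          (P *ᵥ (t (k + 1) • lam (k + 1) - (t (k + 1) - 1) • lam k - lams))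
        + (t (k + 1) • mu (k + 1) - (t (k + 1) - 1) • mu k - mus) ⬝ᵥ
          (R *ᵥ (t (k + 1) • mu (k + 1) - (t (k + 1) - 1) • mu k - mus))) ≤ τ := by
    intro k
    induction k with
    | zero =>
      have h1 := hstep 1 le_rfl lams ps mus hlams
      rw [hinit.1, hinit.2.2.1] at h1
      rw [hτ, negq P (lam 0), negq R (mu 0)]
      simp only [zero_add, ht1, one_smul, sub_self, zero_smul, sub_zero]
      rw [negq P (lam 1), negq R (mu 1)]
      linarith
    | succ n ih =>
      refine le_trans ?_ ih
      obtain ⟨x1, -, x2⟩ := hextr (n + 1) (by omega)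
      simp only [Nat.add_sub_cancel] at x1 x2
      have h1 := hstep (n + 2) (by omega) lams ps mus hlams
      have h2 := hstep (n + 2) (by omega) (lam (n + 1)) (p (n + 1)) (mu (n + 1))
        (hlam (n + 1) (by omega)).1
      have T1 := ht1' n
      have T2 := ht1' (n + 1)
      have T3 := htq n
      have tne : t (n + 2) ≠ 0 := by
        have : 1 ≤ t (n + 2) := T2
        linarith
      have y1 : t (n + 2) • lamE (n + 2) - (t (n + 2) - 1) • lam (n + 1) - lams
          = t (n + 1) • lam (n + 1) - (t (n + 1) - 1) • lam n - lams := by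
        rw [show n + 2 = n + 1 + 1 from rfl] at *
        rw [x1, smul_add, smul_smul, mul_div_cancel₀ _ tne]
        module
      have y2 : t (n + 2) • muE (n + 2) - (t (n + 2) - 1) • mu (n + 1) - mus
          = t (n + 1) • mu (n + 1) - (t (n + 1) - 1) • mu n - mus := by
        rw [show n + 2 = n + 1 + 1 from rfl] at *
        rw [x2, smul_add, smul_smul, mul_div_cancel₀ _ tne]
        module
      have c1 := aux_tcomb P (lam (n + 1)) lams (lamE (n + 2)) (lam (n + 2)) (t (n + 2))
      have c2 := aux_tcomb R (mu (n + 1)) mus (muE (n + 2)) (mu (n + 2)) (t (n + 2))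
      rw [y1] at c1
      rw [y2] at c2
      have z1 := mul_le_mul_of_nonneg_left h1 (show 0 ≤ t (n + 2) by
        have : 1 ≤ t (n + 2) := T2
        linarith)
      have z2 := mul_le_mul_of_nonneg_left h2 (show 0 ≤ t (n + 2) * (t (n + 2) - 1) by
        rw [T3]; positivity)
      rw [← T3]
      have c3 := congrArg (fun v => 1 / (2 * α) * v) c1
      have c4 := congrArg (fun v => 1 / (2 * α) * v) c2
      simp only [show n + 1 + 1 = n + 2 from rfl]
      linarith
  have hgap : ∀ k : ℕ, 0 ≤ F (lam (k + 1)) (p (k + 1)) (mu (k + 1)) - F lams ps mus := fun k =>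
    sub_nonneg.2 (hmin _ (hlam (k + 1) (by omega)).1 _ _)
  have hAα : 0 < 1 / (2 * α) := by positivity
  refine ⟨?_, ?_⟩
  · rintro k hk
    obtain ⟨n, rfl⟩ : ∃ n, k = n + 1 := ⟨k - 1, by omega⟩
    rw [← hτ, le_div_iff₀ (by positivity)]
    have h1 := hfis n
    have h2 := mul_nonneg hAα.le (add_nonneg
      (hP0 (t (n + 1) • lam (n + 1) - (t (n + 1) - 1) • lam n - lams))
      (hR0 (t (n + 1) • mu (n + 1) - (t (n + 1) - 1) • mu n - mus)))
    have h3 := htb n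
    have h4 : (((n : ℝ) + 2) / 2) ^ 2 ≤ t (n + 1) ^ 2 := by gcongr
    have h5 := mul_le_mul_of_nonneg_right h4 (hgap n)
    push_cast
    have h6 : ((n : ℝ) + 1 + 1) ^ 2 = 4 * (((n : ℝ) + 2) / 2) ^ 2 := by ring
    rw [h6]
    linarith
  · obtain ⟨B, hB0, hB⟩ := aux_coord hMsymm hMu hM0 (τ / (1 / (2 * α)))
    have hu : ∀ k : ℕ, ‖t (k + 1) • mu (k + 1) - (t (k + 1) - 1) • mu k - mus‖ ≤ B := by
      intro k
      apply hB
      refine (hMR _).trans ?_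
      rw [le_div_iff₀ hAα]
      have h1 := hfis k
      have h2 := mul_nonneg hAα.le
        (hP0 (t (k + 1) • lam (k + 1) - (t (k + 1) - 1) • lam k - lams))
      have h3 := mul_nonneg (sq_nonneg (t (k + 1))) (hgap k)
      linarith
    have hmb : ∀ k : ℕ, ‖mu k - mus‖ ≤ B + ‖mu 0 - mus‖ := by
      intro k
      induction k with
      | zero => linarith
      | succ n ih =>
        have T1 := ht1' n
        have T0 : 0 < t (n + 1) := by linarith
        have e1 : t (n + 1) • (mu (n + 1) - mus)
            = (t (n + 1) - 1) • (mu n - mus)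
              + (t (n + 1) • mu (n + 1) - (t (n + 1) - 1) • mu n - mus) := by module
        have e2 := congrArg norm e1
        rw [norm_smul, Real.norm_of_nonneg T0.le] at e2
        have e3 := norm_add_le ((t (n + 1) - 1) • (mu n - mus))
          (t (n + 1) • mu (n + 1) - (t (n + 1) - 1) • mu n - mus)
        rw [norm_smul, Real.norm_of_nonneg (by linarith)] at e3
        have e4 := mul_le_mul_of_nonneg_left ih (show 0 ≤ t (n + 1) - 1 by linarith)
        have e5 := hu n
        have e6 := norm_nonneg (mu 0 - mus)
        have : t (n + 1) * ‖mu (n + 1) - mus‖ ≤ t (n + 1) * (B + ‖mu 0 - mus‖) := by linarith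
        exact le_of_mul_le_mul_left this T0
    obtain ⟨Bm, hBm⟩ : ∃ Bm, Bm = B + ‖mu 0 - mus‖ + ‖mus‖ := ⟨_, rfl⟩
    have hmb2 : ∀ k : ℕ, ‖mu k‖ ≤ Bm := by
      intro k
      have h1 := hmb k
      have h2 := norm_le_norm_sub_add (mu k) mus
      linarith
    have hlb : ∀ k : ℕ, ‖lam k‖ ≤ β := by
      intro k
      rw [pi_norm_le_iff_of_nonneg hβ.le]
      intro i
      rw [Real.norm_eq_abs]
      rcases Nat.eq_zero_or_pos k with rfl | h
      · exact hinit.2.2.2 i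
      · exact (hlam k h).1 i
    have hme : ∀ k : ℕ, ‖muE (k + 1)‖ ≤ 3 * Bm := by
      intro k
      have hBm0 : 0 ≤ Bm := (norm_nonneg _).trans (hmb2 0)
      cases k with
      | zero =>
        rw [zero_add, hinit.2.2.1]
        linarith [hmb2 0]
      | succ n =>
        rw [(hextr (n + 1) (by omega)).2.2]
        simp only [Nat.add_sub_cancel]
        have T1 := ht1' n
        have T2 := ht1' (n + 1)
        have T3 := htq n
        simp only [show n + 1 + 1 = n + 2 from rfl] at *
        have c0 : 0 ≤ (t (n + 1) - 1) / t (n + 2) := div_nonneg (by linarith) (by linarith)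
        have c1 : (t (n + 1) - 1) / t (n + 2) ≤ 1 := by
          rw [div_le_one (by linarith)]
          nlinarith
        have h1 := norm_add_le (mu (n + 1)) (((t (n + 1) - 1) / t (n + 2)) • (mu (n + 1) - mu n))
        rw [norm_smul, Real.norm_of_nonneg c0] at h1
        have h2 := norm_sub_le (mu (n + 1)) (mu n)
        have h3 := mul_le_mul_of_nonneg_right c1 (norm_nonneg (mu (n + 1) - mu n))
        linarith [hmb2 n, hmb2 (n + 1)]
    obtain ⟨C1, hC1, hC1'⟩ := aux_mv A⁻¹
    obtain ⟨C2, hC2, hC2'⟩ := aux_mv M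
    obtain ⟨Bp, hBp⟩ : ∃ Bp, Bp = C1 * (C2 * (β + 3 * Bm) + ‖α • (K *ᵥ yd - M *ᵥ yr)‖) :=
      ⟨_, rfl⟩
    have hpb : ∀ k : ℕ, ‖p (k + 1)‖ ≤ Bp := by
      intro k
      rw [hinvA _ _ (hpv (k + 1) (by omega)), hBp]
      refine (hC1' _).trans (mul_le_mul_of_nonneg_left ?_ hC1)
      refine (norm_add_le _ _).trans (add_le_add_left ?_ _)
      refine (hC2' _).trans (mul_le_mul_of_nonneg_left ?_ hC2)
      exact (norm_add_le _ _).trans (add_le_add (hlb _) (hme k))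
    refine ⟨β + (Bp + ‖p 0‖) + Bm, fun k => ?_⟩
    have hpk : ‖p k‖ ≤ Bp + ‖p 0‖ := by
      cases k with
      | zero =>
        have := (norm_nonneg _).trans (hpb 0)
        linarith
      | succ n =>
        have := norm_nonneg (p 0)
        linarith [hpb n]
    linarith [hlb k, hmb2 k]
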